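/- arXiv:1809.09814 — 3 statements merged into one kernel-verified Lean document; each statement's English description precedes it below -/
import Mathlib

section
/- Theorem 1 (feasibility preservation of the penalized convex relaxation): Suppose the BMI feasible set F is nonempty, x̌ ∈ F satisfies the MFCQ condition, and C ∈ {C₁, C₂, C₃}. Then there exists η₀ > 0 such that for every η ≥ η₀, the penalized convex relaxation (R_{η,C}) has an optimal solution (x*, X*) which is unique (every optimal solution of (R_{η,C}) equals (x*, X*)), and this solution satisfies X* = x* x*ᵀ and cᵀx* ≤ cᵀx̌. -/
/-!
Write `H = X - xxᵀ`. The objective of the relaxation is `cᵀx + η (‖x - x̌‖² + tr H)`, and all three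
cones lie in `C₃`, on which `tr H` dominates every `|Hᵢⱼ|`; so `t = tr H` measures the relaxation
gap, and `t = 0` forces `X = xxᵀ`.

The penalty is exact (`exact_penalty`). A point `(x, X)` at least as good as `x̌` satisfies
`‖x - x̌‖ = O(1/η)` and `t = O(1/η)`, so it lies in a neighbourhood of `x̌` where the MFCQ direction
`b` works with a uniform margin (`MFCQ.uniform`). Since `p(x, X) ⪯ 0`, the matrix `p(x, xxᵀ)` is at
most `O(t) I`, and a step of length proportional to `t` along `b` restores feasibility for the
original problem. That step costs `O(t)`, uniformly in `η`, while it saves `η t`. Hence for large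
`η` a point with `t > 0` is strictly beaten by a point of the form `(y, yyᵀ)`.

Existence of an optimum thus reduces to minimizing the coercive function `cᵀx + η ‖x - x̌‖²` over the
closed set `F` (`exists_penalized_min`). For uniqueness, the midpoint of two optimal solutions
`(x, xxᵀ)`, `(y, yyᵀ)` is again optimal with gap `vvᵀ`, `v = (x - y) / 2`, and exactness
gives `v = 0`. Comparison with `x̌` gives `cᵀx* ≤ cᵀx̌`.
-/

open Matrix

noncomputable section

/-- Euclidean (ℓ₂) norm of a finite real vector. -/
def vecNorm {k : ℕ} (u : Fin k → ℝ) : ℝ := Real.sqrt (∑ i, u i ^ 2)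

/-- The matrix pencil `p(x, X) = F₀ + ∑ₖ xₖ Kₖ + ∑ᵢ ∑ⱼ Xᵢⱼ Lᵢⱼ`. -/
def pencil {n m : ℕ} (F0 : Matrix (Fin m) (Fin m) ℝ)
    (K : Fin n → Matrix (Fin m) (Fin m) ℝ)
    (L : Fin n → Fin n → Matrix (Fin m) (Fin m) ℝ)
    (x : Fin n → ℝ) (X : Matrix (Fin n) (Fin n) ℝ) : Matrix (Fin m) (Fin m) ℝ :=
  F0 + ∑ k, x k • K k + ∑ i, ∑ j, X i j • L i j

/-- Negative semidefinite real matrix. -/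
def NegSemidef' {k : ℕ} (A : Matrix (Fin k) (Fin k) ℝ) : Prop := (-A).PosSemidef

/-- Negative definite real matrix. -/
def NegDef' {k : ℕ} (A : Matrix (Fin k) (Fin k) ℝ) : Prop := (-A).PosDef

/-- The BMI feasible set `F = {x : p(x, xxᵀ) ⪯ 0}`. -/
def feasSet {n m : ℕ} (F0 : Matrix (Fin m) (Fin m) ℝ)
    (K : Fin n → Matrix (Fin m) (Fin m) ℝ)
    (L : Fin n → Fin n → Matrix (Fin m) (Fin m) ℝ) : Set (Fin n → ℝ) :=
  {x | NegSemidef' (pencil F0 K L x (vecMulVec x x))}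

/-- Feasibility distance `d_F(x) = inf {‖x − a‖₂ : a ∈ F}`. -/
def distF {n m : ℕ} (F0 : Matrix (Fin m) (Fin m) ℝ)
    (K : Fin n → Matrix (Fin m) (Fin m) ℝ)
    (L : Fin n → Fin n → Matrix (Fin m) (Fin m) ℝ) (x : Fin n → ℝ) : ℝ :=
  sInf {r | ∃ a ∈ feasSet F0 K L, r = vecNorm (x - a)}

/-- `δₖ(x) = 2 ∑ᵢ xᵢ L_{k i}`. -/
def deltaMat {n m : ℕ} (L : Fin n → Fin n → Matrix (Fin m) (Fin m) ℝ)
    (k : Fin n) (x : Fin n → ℝ) : Matrix (Fin m) (Fin m) ℝ :=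
  (2 : ℝ) • ∑ i, x i • L k i

/-- The MFCQ condition at a point `x`. -/
def MFCQ {n m : ℕ} (F0 : Matrix (Fin m) (Fin m) ℝ)
    (K : Fin n → Matrix (Fin m) (Fin m) ℝ)
    (L : Fin n → Fin n → Matrix (Fin m) (Fin m) ℝ) (x : Fin n → ℝ) : Prop :=
  ∃ b : Fin n → ℝ,
    NegDef' (pencil F0 K L x (vecMulVec x x) + ∑ k, b k • (K k + deltaMat L k x))

/-- Smallest eigenvalue of a symmetric real matrix, via the Rayleigh quotient. -/
def lambdaMin {k : ℕ} (A : Matrix (Fin k) (Fin k) ℝ) : ℝ :=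
  sInf {r | ∃ u : Fin k → ℝ, vecNorm u = 1 ∧ r = u ⬝ᵥ (A *ᵥ u)}

/-- The G-MFCQ function `s(x)`. -/
def sFun {n m : ℕ} (K : Fin n → Matrix (Fin m) (Fin m) ℝ)
    (L : Fin n → Fin n → Matrix (Fin m) (Fin m) ℝ) (x : Fin n → ℝ) : ℝ :=
  sSup {r | ∃ b : Fin n → ℝ, vecNorm b = 1 ∧
    r = lambdaMin (-(∑ k, b k • (K k + deltaMat L k x)))}

/-- Spectral norm of a real matrix. -/
def specNorm {k : ℕ} (A : Matrix (Fin k) (Fin k) ℝ) : ℝ :=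
  sSup {r | ∃ v : Fin k → ℝ, vecNorm v = 1 ∧ r = vecNorm (A *ᵥ v)}

/-- Pencil norm `‖p‖₂`. -/
def pencilNorm {n m : ℕ} (L : Fin n → Fin n → Matrix (Fin m) (Fin m) ℝ) : ℝ :=
  sSup {r | ∃ u : Fin m → ℝ, vecNorm u = 1 ∧
    r = specNorm (Matrix.of fun i j => u ⬝ᵥ (L i j *ᵥ u))}

/-- Cone `C₁`: positive semidefinite matrices. -/
def coneC1 (n : ℕ) : Set (Matrix (Fin n) (Fin n) ℝ) := {H | H.PosSemidef}

/-- Cone `C₂`: symmetric matrices with `Hᵢᵢ ≥ 0` and `Hᵢᵢ Hⱼⱼ ≥ Hᵢⱼ²`. -/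
def coneC2 (n : ℕ) : Set (Matrix (Fin n) (Fin n) ℝ) :=
  {H | H.IsSymm ∧ ∀ i j, 0 ≤ H i i ∧ H i j ^ 2 ≤ H i i * H j j}

/-- Cone `C₃`: symmetric matrices with `Hᵢᵢ ≥ 0` and `Hᵢᵢ + Hⱼⱼ ≥ 2|Hᵢⱼ|`. -/
def coneC3 (n : ℕ) : Set (Matrix (Fin n) (Fin n) ℝ) :=
  {H | H.IsSymm ∧ ∀ i j, 0 ≤ H i i ∧ 2 * |H i j| ≤ H i i + H j j}

/-- Dual cone with respect to the trace inner product. -/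
def dualCone {n : ℕ} (C : Set (Matrix (Fin n) (Fin n) ℝ)) :
    Set (Matrix (Fin n) (Fin n) ℝ) :=
  {Y | Y.IsSymm ∧ ∀ H ∈ C, 0 ≤ (Y * H).trace}

/-- `α(Λ)` : the n×n matrix with entries `⟨Lᵢⱼ, Λ⟩ = tr(Lᵢⱼ Λ)`. -/
def alphaMat {n m : ℕ} (L : Fin n → Fin n → Matrix (Fin m) (Fin m) ℝ)
    (Λ : Matrix (Fin m) (Fin m) ℝ) : Matrix (Fin n) (Fin n) ℝ :=
  Matrix.of fun i j => (L i j * Λ).trace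

/-- Objective of the penalized problem `(P_η)`. -/
def penObj {n : ℕ} (c xc : Fin n → ℝ) (η : ℝ) (x : Fin n → ℝ) : ℝ :=
  c ⬝ᵥ x + η * vecNorm (x - xc) ^ 2

/-- `x` is an optimal solution of the penalized problem `(P_η)`. -/
def IsOptPen {n m : ℕ} (F0 : Matrix (Fin m) (Fin m) ℝ)
    (K : Fin n → Matrix (Fin m) (Fin m) ℝ)
    (L : Fin n → Fin n → Matrix (Fin m) (Fin m) ℝ)
    (c xc : Fin n → ℝ) (η : ℝ) (x : Fin n → ℝ) : Prop :=
  x ∈ feasSet F0 K L ∧ ∀ y ∈ feasSet F0 K L, penObj c xc η x ≤ penObj c xc η y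

/-- Objective of the penalized convex relaxation `(R_{η,C})`. -/
def relObj {n : ℕ} (c xc : Fin n → ℝ) (η : ℝ) (x : Fin n → ℝ)
    (X : Matrix (Fin n) (Fin n) ℝ) : ℝ :=
  c ⬝ᵥ x + η * (X.trace - 2 * (xc ⬝ᵥ x) + xc ⬝ᵥ xc)

/-- Feasibility for the relaxation with cone `C`. -/
def RelFeasible {n m : ℕ} (F0 : Matrix (Fin m) (Fin m) ℝ)
    (K : Fin n → Matrix (Fin m) (Fin m) ℝ)
    (L : Fin n → Fin n → Matrix (Fin m) (Fin m) ℝ)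
    (C : Set (Matrix (Fin n) (Fin n) ℝ))
    (x : Fin n → ℝ) (X : Matrix (Fin n) (Fin n) ℝ) : Prop :=
  X.IsSymm ∧ NegSemidef' (pencil F0 K L x X) ∧ X - vecMulVec x x ∈ C

/-- `(x, X)` is an optimal solution of the penalized convex relaxation `(R_{η,C})`. -/
def IsOptRel {n m : ℕ} (F0 : Matrix (Fin m) (Fin m) ℝ)
    (K : Fin n → Matrix (Fin m) (Fin m) ℝ)
    (L : Fin n → Fin n → Matrix (Fin m) (Fin m) ℝ)
    (c xc : Fin n → ℝ) (η : ℝ) (C : Set (Matrix (Fin n) (Fin n) ℝ))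
    (x : Fin n → ℝ) (X : Matrix (Fin n) (Fin n) ℝ) : Prop :=
  RelFeasible F0 K L C x X ∧
    ∀ y Y, RelFeasible F0 K L C y Y → relObj c xc η x X ≤ relObj c xc η y Y

/-- The KKT conditions for `(P_η)` at `(x, Λ)`. -/
def KKT {n m : ℕ} (F0 : Matrix (Fin m) (Fin m) ℝ)
    (K : Fin n → Matrix (Fin m) (Fin m) ℝ)
    (L : Fin n → Fin n → Matrix (Fin m) (Fin m) ℝ)
    (c xc : Fin n → ℝ) (η : ℝ)
    (x : Fin n → ℝ) (Λ : Matrix (Fin m) (Fin m) ℝ) : Prop :=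
  Λ.IsSymm ∧ Λ.PosSemidef ∧
  c + (2 * η) • (x - xc) + (∑ k, ((K k * Λ).trace) • (Pi.single k 1 : Fin n → ℝ))
      + (2 : ℝ) • (alphaMat L Λ *ᵥ x) = 0 ∧
  Λ * pencil F0 K L x (vecMulVec x x) = 0


/-! ### Elementary estimates -/

lemma abs_dotProduct_le {n : ℕ} (c d : Fin n → ℝ) : |c ⬝ᵥ d| ≤ (∑ i, |c i|) * ‖d‖ := by
  rw [dotProduct, Finset.sum_mul]
  refine (Finset.abs_sum_le_sum_abs _ _).trans (Finset.sum_le_sum fun i _ => ?_)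
  rw [abs_mul]
  exact mul_le_mul_of_nonneg_left (norm_le_pi_norm d i) (abs_nonneg _)

lemma sq_apply_le_dotProduct {n : ℕ} (u : Fin n → ℝ) (i : Fin n) : u i ^ 2 ≤ u ⬝ᵥ u := by
  rw [dotProduct, sq]
  exact Finset.single_le_sum (f := fun i => u i * u i) (fun j _ => mul_self_nonneg _)
    (Finset.mem_univ i)

lemma dotProduct_self_nonneg_real {n : ℕ} (u : Fin n → ℝ) : 0 ≤ u ⬝ᵥ u :=
  Finset.sum_nonneg fun _ _ => mul_self_nonneg _

/-- The ambient norm on `Fin n → ℝ` is the sup norm, hence bounded by the Euclidean one. -/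
lemma norm_sq_le_dotProduct {n : ℕ} (d : Fin n → ℝ) : ‖d‖ ^ 2 ≤ d ⬝ᵥ d := by
  have h : ‖d‖ ≤ √(d ⬝ᵥ d) := by
    rw [pi_norm_le_iff_of_nonneg (Real.sqrt_nonneg _)]
    intro i
    exact Real.abs_le_sqrt (sq_apply_le_dotProduct d i)
  calc ‖d‖ ^ 2 ≤ √(d ⬝ᵥ d) ^ 2 := by gcongr
    _ = d ⬝ᵥ d := Real.sq_sqrt (dotProduct_self_nonneg_real d)

lemma abs_quadForm_le {m : ℕ} (A : Matrix (Fin m) (Fin m) ℝ) (u : Fin m → ℝ) :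
    |u ⬝ᵥ (A *ᵥ u)| ≤ (∑ i, ∑ j, |A i j|) * (u ⬝ᵥ u) := by
  have hexp : u ⬝ᵥ (A *ᵥ u) = ∑ i, ∑ j, u i * (A i j * u j) := by
    simp [dotProduct, mulVec, Finset.mul_sum]
  rw [hexp, Finset.sum_mul]
  refine (Finset.abs_sum_le_sum_abs _ _).trans (Finset.sum_le_sum fun i _ => ?_)
  rw [Finset.sum_mul]
  refine (Finset.abs_sum_le_sum_abs _ _).trans (Finset.sum_le_sum fun j _ => ?_)
  have h1 := sq_apply_le_dotProduct u i
  have h2 := sq_apply_le_dotProduct u j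
  have h3 : |u i| * |u j| ≤ u ⬝ᵥ u := by
    rw [← sq_abs] at h1 h2
    nlinarith [sq_nonneg (|u i| - |u j|)]
  calc |u i * (A i j * u j)| = |A i j| * (|u i| * |u j|) := by
        rw [abs_mul, abs_mul]
        ring
    _ ≤ _ := mul_le_mul_of_nonneg_left h3 (abs_nonneg _)

/-- A positive definite quadratic form dominates a positive multiple of the Euclidean one. -/
lemma posDef_coercive {m : ℕ} {A : Matrix (Fin m) (Fin m) ℝ} (hA : A.PosDef) :
    ∃ ε > 0, ∀ u : Fin m → ℝ, ε * (u ⬝ᵥ u) ≤ u ⬝ᵥ (A *ᵥ u) := by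
  have hcont : Continuous fun u : Fin m → ℝ => u ⬝ᵥ (A *ᵥ u) := by fun_prop
  obtain hS | hS := (Metric.sphere (0 : Fin m → ℝ) 1).eq_empty_or_nonempty
  · refine ⟨1, one_pos, fun u => ?_⟩
    by_cases hu : u = 0
    · simp [hu]
    · have : ‖u‖⁻¹ • u ∈ Metric.sphere (0 : Fin m → ℝ) 1 := by
        simp [norm_smul, norm_ne_zero_iff.2 hu]
      simp [hS] at this
  obtain ⟨v, hv, hmin⟩ := (isCompact_sphere (0 : Fin m → ℝ) 1).exists_isMinOn hS hcont.continuousOn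
  have hv0 : v ≠ 0 := by
    rintro rfl
    simp at hv
  have hpos : 0 < v ⬝ᵥ (A *ᵥ v) := by simpa using hA.dotProduct_mulVec_pos hv0
  refine ⟨v ⬝ᵥ (A *ᵥ v) / (m + 1), by positivity, fun u => ?_⟩
  by_cases hu : u = 0
  · simp [hu]
  have hu' : 0 < ‖u‖ := norm_pos_iff.2 hu
  have hmem : ‖u‖⁻¹ • u ∈ Metric.sphere (0 : Fin m → ℝ) 1 := by
    simp [norm_smul, hu'.ne']
  have h1 : v ⬝ᵥ (A *ᵥ v) ≤ (‖u‖⁻¹ • u) ⬝ᵥ (A *ᵥ (‖u‖⁻¹ • u)) := hmin hmem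
  rw [mulVec_smul, dotProduct_smul, smul_dotProduct, smul_eq_mul, smul_eq_mul, ← mul_assoc,
    ← mul_inv, inv_mul_eq_div, le_div_iff₀ (by positivity)] at h1
  have h2 : u ⬝ᵥ u ≤ (m + 1) * (‖u‖ * ‖u‖) := by
    calc u ⬝ᵥ u ≤ ∑ _i : Fin m, ‖u‖ * ‖u‖ := by
          refine Finset.sum_le_sum fun i _ => ?_
          have := norm_le_pi_norm u i
          rw [← abs_mul_abs_self (u i)]
          exact mul_le_mul this this (abs_nonneg _) hu'.le
      _ = m * (‖u‖ * ‖u‖) := by simp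
      _ ≤ _ := by nlinarith
  calc v ⬝ᵥ (A *ᵥ v) / (m + 1) * (u ⬝ᵥ u)
      ≤ v ⬝ᵥ (A *ᵥ v) / (m + 1) * ((m + 1) * (‖u‖ * ‖u‖)) := by gcongr
    _ = v ⬝ᵥ (A *ᵥ v) * (‖u‖ * ‖u‖) := by field_simp
    _ ≤ _ := h1

/-! ### The cones -/

lemma trace_bounds_of_mem_coneC3 {n : ℕ} {H : Matrix (Fin n) (Fin n) ℝ} (hH : H ∈ coneC3 n) :
    0 ≤ H.trace ∧ ∀ i j, |H i j| ≤ H.trace := by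
  have hd : ∀ i, 0 ≤ H i i := fun i => (hH.2 i i).1
  have ht : ∀ i, H i i ≤ H.trace := fun i =>
    Finset.single_le_sum (f := fun i => H i i) (fun j _ => hd j) (Finset.mem_univ i)
  refine ⟨Finset.sum_nonneg fun i _ => hd i, fun i j => ?_⟩
  linarith [(hH.2 i j).2, ht i, ht j]

lemma coneC2_subset_coneC3 (n : ℕ) : coneC2 n ⊆ coneC3 n := by
  refine fun H hH => ⟨hH.1, fun i j => ⟨(hH.2 i j).1, ?_⟩⟩
  have h1 := (hH.2 i j).1
  have h2 := (hH.2 j i).1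
  have h3 := (hH.2 i j).2
  rw [← sq_abs] at h3
  refine (sq_le_sq₀ (by positivity) (by linarith)).1 ?_
  nlinarith [sq_nonneg (H i i - H j j)]

lemma coneC1_subset_coneC3 (n : ℕ) : coneC1 n ⊆ coneC3 n := by
  intro H hH
  have hH' : H.PosSemidef := hH
  have hs : H.IsSymm := by simpa [Matrix.IsHermitian, Matrix.IsSymm] using hH'.1
  refine ⟨hs, fun i j => ⟨hH'.diag_nonneg, ?_⟩⟩
  -- test the quadratic form on `eᵢ + eⱼ` and `eᵢ - eⱼ`
  have h1 := hH'.dotProduct_mulVec_nonneg (Pi.single i 1 + Pi.single j 1)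
  have h2 := hH'.dotProduct_mulVec_nonneg (Pi.single i 1 - Pi.single j 1)
  have h3 := hs.apply i j
  simp [mulVec_add, mulVec_sub, add_dotProduct, sub_dotProduct] at h1 h2
  have h4 : |H i j| ≤ (H i i + H j j) / 2 := abs_le.2 ⟨by linarith, by linarith⟩
  linarith

lemma vecMulVec_self_mem_coneC1 {n : ℕ} (v : Fin n → ℝ) : vecMulVec v v ∈ coneC1 n := by
  simpa [coneC1] using posSemidef_vecMulVec_self_star v

lemma vecMulVec_self_mem_coneC2 {n : ℕ} (v : Fin n → ℝ) : vecMulVec v v ∈ coneC2 n := by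
  refine ⟨transpose_vecMulVec v v, fun i j => ⟨mul_self_nonneg _, le_of_eq ?_⟩⟩
  simp only [vecMulVec_apply]
  ring

/-! ### The pencil -/

lemma quadForm_pencil {n m : ℕ} (F0 : Matrix (Fin m) (Fin m) ℝ)
    (K : Fin n → Matrix (Fin m) (Fin m) ℝ) (L : Fin n → Fin n → Matrix (Fin m) (Fin m) ℝ)
    (x : Fin n → ℝ) (X : Matrix (Fin n) (Fin n) ℝ) (u : Fin m → ℝ) :
    u ⬝ᵥ (pencil F0 K L x X *ᵥ u) = u ⬝ᵥ (F0 *ᵥ u) + ∑ k, x k * (u ⬝ᵥ (K k *ᵥ u))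
      + ∑ i, ∑ j, X i j * (u ⬝ᵥ (L i j *ᵥ u)) := by
  simp [pencil, add_mulVec, sum_mulVec, smul_mulVec, dotProduct_add, dotProduct_sum]

lemma quadForm_direction {n m : ℕ}
    (K : Fin n → Matrix (Fin m) (Fin m) ℝ) (L : Fin n → Fin n → Matrix (Fin m) (Fin m) ℝ)
    (x b : Fin n → ℝ) (u : Fin m → ℝ) :
    u ⬝ᵥ ((∑ k, b k • (K k + deltaMat L k x)) *ᵥ u) = ∑ k, b k * (u ⬝ᵥ (K k *ᵥ u))
      + 2 * ∑ k, ∑ i, b k * x i * (u ⬝ᵥ (L k i *ᵥ u)) := by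
  simp [deltaMat, add_mulVec, sum_mulVec, smul_mulVec, dotProduct_add, dotProduct_sum,
    Finset.sum_add_distrib, Finset.mul_sum]
  refine Finset.sum_congr rfl fun k _ => Finset.sum_congr rfl fun i _ => ?_
  ring

lemma pencil_isSymm {n m : ℕ} {F0 : Matrix (Fin m) (Fin m) ℝ}
    {K : Fin n → Matrix (Fin m) (Fin m) ℝ} {L : Fin n → Fin n → Matrix (Fin m) (Fin m) ℝ}
    (hF0 : F0.IsSymm) (hK : ∀ k, (K k).IsSymm) (hL : ∀ i j, (L i j).IsSymm)
    (x : Fin n → ℝ) (X : Matrix (Fin n) (Fin n) ℝ) : (pencil F0 K L x X).IsSymm := by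
  simp only [Matrix.IsSymm] at *
  simp [pencil, transpose_sum, hF0, hK, hL]

lemma negSemidef_iff {m : ℕ} {A : Matrix (Fin m) (Fin m) ℝ} (hA : A.IsSymm) :
    NegSemidef' A ↔ ∀ u, u ⬝ᵥ (A *ᵥ u) ≤ 0 := by
  have : (-A).IsHermitian := by
    simp only [Matrix.IsSymm] at hA
    simp [Matrix.IsHermitian, hA]
  rw [NegSemidef', posSemidef_iff_dotProduct_mulVec, and_iff_right this]
  simp [neg_mulVec]

/-- Second-order expansion of `p(x + sb, (x + sb)(x + sb)ᵀ)`, grouped so that the weight `s`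
falls on the matrix appearing in the MFCQ condition. -/
lemma quadForm_pencil_step {n m : ℕ} (F0 : Matrix (Fin m) (Fin m) ℝ)
    (K : Fin n → Matrix (Fin m) (Fin m) ℝ) (L : Fin n → Fin n → Matrix (Fin m) (Fin m) ℝ)
    (hLsy : ∀ i j, L i j = L j i) (x b : Fin n → ℝ) (s : ℝ) (u : Fin m → ℝ) :
    u ⬝ᵥ (pencil F0 K L (x + s • b) (vecMulVec (x + s • b) (x + s • b)) *ᵥ u) =
      (1 - s) * (u ⬝ᵥ (pencil F0 K L x (vecMulVec x x) *ᵥ u))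
      + s * (u ⬝ᵥ ((pencil F0 K L x (vecMulVec x x)
          + ∑ k, b k • (K k + deltaMat L k x)) *ᵥ u))
      + s ^ 2 * (u ⬝ᵥ ((∑ i, ∑ j, (b i * b j) • L i j) *ᵥ u)) := by
  have hsw : ∑ i, ∑ j, x i * b j * (u ⬝ᵥ (L i j *ᵥ u))
      = ∑ i, ∑ j, b i * x j * (u ⬝ᵥ (L i j *ᵥ u)) := by
    rw [Finset.sum_comm]
    refine Finset.sum_congr rfl fun k _ => Finset.sum_congr rfl fun i _ => ?_
    rw [hLsy i k]
    ring
  have hexp : ∑ i, ∑ j, (x i + s * b i) * (x j + s * b j) * (u ⬝ᵥ (L i j *ᵥ u))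
      = ∑ i, ∑ j, x i * x j * (u ⬝ᵥ (L i j *ᵥ u))
        + s * ∑ i, ∑ j, x i * b j * (u ⬝ᵥ (L i j *ᵥ u))
        + s * ∑ i, ∑ j, b i * x j * (u ⬝ᵥ (L i j *ᵥ u))
        + s ^ 2 * ∑ i, ∑ j, b i * b j * (u ⬝ᵥ (L i j *ᵥ u)) := by
    simp only [Finset.mul_sum, ← Finset.sum_add_distrib]
    refine Finset.sum_congr rfl fun k _ => Finset.sum_congr rfl fun i _ => ?_
    ring
  have hlin : ∑ k, (x k + s * b k) * (u ⬝ᵥ (K k *ᵥ u))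
      = ∑ k, x k * (u ⬝ᵥ (K k *ᵥ u)) + s * ∑ k, b k * (u ⬝ᵥ (K k *ᵥ u)) := by
    simp only [Finset.mul_sum, ← Finset.sum_add_distrib]
    refine Finset.sum_congr rfl fun k _ => ?_
    ring
  have hQ : u ⬝ᵥ ((∑ i, ∑ j, (b i * b j) • L i j) *ᵥ u)
      = ∑ i, ∑ j, b i * b j * (u ⬝ᵥ (L i j *ᵥ u)) := by
    simp [sum_mulVec, smul_mulVec, dotProduct_sum]
  rw [add_mulVec, dotProduct_add, quadForm_direction, quadForm_pencil, quadForm_pencil, hQ]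
  simp only [vecMulVec_apply, Pi.add_apply, Pi.smul_apply, smul_eq_mul]
  rw [hexp, hlin, hsw]
  ring

lemma continuous_pencil {n m : ℕ} (F0 : Matrix (Fin m) (Fin m) ℝ)
    (K : Fin n → Matrix (Fin m) (Fin m) ℝ) (L : Fin n → Fin n → Matrix (Fin m) (Fin m) ℝ) :
    Continuous fun x : Fin n → ℝ => pencil F0 K L x (vecMulVec x x) := by
  unfold pencil
  simp only [vecMulVec_apply]
  fun_prop

lemma continuous_direction {n m : ℕ}
    (K : Fin n → Matrix (Fin m) (Fin m) ℝ) (L : Fin n → Fin n → Matrix (Fin m) (Fin m) ℝ)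
    (b : Fin n → ℝ) :
    Continuous fun x : Fin n → ℝ => ∑ k, b k • (K k + deltaMat L k x) := by
  unfold deltaMat
  fun_prop

lemma isClosed_feasSet {n m : ℕ} {F0 : Matrix (Fin m) (Fin m) ℝ}
    {K : Fin n → Matrix (Fin m) (Fin m) ℝ} {L : Fin n → Fin n → Matrix (Fin m) (Fin m) ℝ}
    (hF0 : F0.IsSymm) (hK : ∀ k, (K k).IsSymm) (hL : ∀ i j, (L i j).IsSymm) :
    IsClosed (feasSet F0 K L) := by
  have : feasSet F0 K L
      = ⋂ u : Fin m → ℝ, {x | u ⬝ᵥ (pencil F0 K L x (vecMulVec x x) *ᵥ u) ≤ 0} := by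
    ext x
    simp [feasSet, negSemidef_iff (pencil_isSymm hF0 hK hL _ _)]
  rw [this]
  refine isClosed_iInter fun u => isClosed_le ?_ continuous_const
  have := continuous_pencil F0 K L
  fun_prop

/-- The MFCQ inequality at `xc` persists, with a uniform margin, in a neighbourhood of `xc`. -/
lemma MFCQ.uniform {n m : ℕ} {F0 : Matrix (Fin m) (Fin m) ℝ}
    {K : Fin n → Matrix (Fin m) (Fin m) ℝ} {L : Fin n → Fin n → Matrix (Fin m) (Fin m) ℝ}
    {xc : Fin n → ℝ} (h : MFCQ F0 K L xc) :
    ∃ b : Fin n → ℝ, ∃ ε > 0, ∃ ρ > 0, ∀ x, ‖x - xc‖ < ρ → ∀ u : Fin m → ℝ,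
      u ⬝ᵥ ((pencil F0 K L x (vecMulVec x x) + ∑ k, b k • (K k + deltaMat L k x)) *ᵥ u)
        ≤ -ε * (u ⬝ᵥ u) := by
  obtain ⟨b, hb⟩ := h
  obtain ⟨ε, hε, hcoer⟩ := posDef_coercive hb
  set P : (Fin n → ℝ) → Matrix (Fin m) (Fin m) ℝ := fun x =>
    pencil F0 K L x (vecMulVec x x) + ∑ k, b k • (K k + deltaMat L k x) with hP
  have hPc : Continuous P := (continuous_pencil F0 K L).add (continuous_direction K L b)
  have hg : Continuous fun x => ∑ i, ∑ j, |(P x - P xc) i j| := by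
    simp only [Matrix.sub_apply]
    fun_prop
  obtain ⟨ρ, hρ, hnear⟩ := Metric.continuousAt_iff.1 hg.continuousAt (ε / 2) (half_pos hε)
  refine ⟨b, ε / 2, half_pos hε, ρ, hρ, fun x hx u => ?_⟩
  have h1 := hnear (by rwa [dist_eq_norm])
  simp only [sub_self, Matrix.zero_apply, abs_zero, Finset.sum_const_zero, Real.dist_eq, sub_zero] at h1
  have h2 := abs_quadForm_le (P x - P xc) u
  have h3 := hcoer u
  have hu := dotProduct_self_nonneg_real u
  have h4 : (∑ i, ∑ j, |(P x - P xc) i j|) * (u ⬝ᵥ u) ≤ ε / 2 * (u ⬝ᵥ u) :=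
    mul_le_mul_of_nonneg_right ((le_abs_self _).trans h1.le) hu
  have h5 := (abs_le.1 (h2.trans h4)).2
  rw [sub_mulVec, dotProduct_sub] at h5
  rw [neg_mulVec, dotProduct_neg] at h3
  change u ⬝ᵥ (P x *ᵥ u) ≤ _
  change ε * (u ⬝ᵥ u) ≤ -(u ⬝ᵥ (P xc *ᵥ u)) at h3
  linarith

/-! ### Exactness of the penalty -/

lemma relObj_eq {n : ℕ} (c xc : Fin n → ℝ) (η : ℝ) (x : Fin n → ℝ)
    (X : Matrix (Fin n) (Fin n) ℝ) :
    relObj c xc η x X = c ⬝ᵥ xc + c ⬝ᵥ (x - xc)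
      + η * ((x - xc) ⬝ᵥ (x - xc) + (X - vecMulVec x x).trace) := by
  simp only [relObj, dotProduct_sub, sub_dotProduct, trace_sub, trace_vecMulVec,
    dotProduct_comm x xc]
  ring

/-- `r` and `t` stand for `‖x - x̌‖` and the gap; the hypothesis `h` is what comparing the objective
at `(x, X)` with its value at `x̌` yields. -/
lemma localisation {η G r t : ℝ} (hη : 1 ≤ η) (hG : 0 ≤ G) (hr : 0 ≤ r) (ht : 0 ≤ t)
    (h : η * (r ^ 2 + t) ≤ G * r) : η * r ≤ G ∧ η * t ≤ G ^ 2 := by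
  have h1 : η * r ≤ G := by
    by_contra! hcon
    have hr' : 0 < r := by
      refine lt_of_le_of_ne hr ?_
      rintro rfl
      linarith
    nlinarith [mul_lt_mul_of_pos_right hcon hr', mul_nonneg (zero_le_one.trans hη) ht]
  have h2 : r ≤ G := by nlinarith
  refine ⟨h1, ?_⟩
  nlinarith [mul_le_mul_of_nonneg_left h2 hG, sq_nonneg r]

/-- Replacing `X` by `xxᵀ` in the pencil costs at most a multiple of the gap bound `t`. -/
lemma quadForm_le_of_gap {n m : ℕ} {F0 : Matrix (Fin m) (Fin m) ℝ}
    {K : Fin n → Matrix (Fin m) (Fin m) ℝ} {L : Fin n → Fin n → Matrix (Fin m) (Fin m) ℝ}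
    {x : Fin n → ℝ} {X : Matrix (Fin n) (Fin n) ℝ} {t : ℝ} {u : Fin m → ℝ} (ht : 0 ≤ t)
    (htb : ∀ i j, |(X - vecMulVec x x) i j| ≤ t) (hX : u ⬝ᵥ (pencil F0 K L x X *ᵥ u) ≤ 0) :
    u ⬝ᵥ (pencil F0 K L x (vecMulVec x x) *ᵥ u)
      ≤ (∑ i, ∑ j, ∑ k, ∑ l, |L i j k l|) * t * (u ⬝ᵥ u) := by
  have h5 : u ⬝ᵥ (pencil F0 K L x X *ᵥ u) = u ⬝ᵥ (pencil F0 K L x (vecMulVec x x) *ᵥ u)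
      + ∑ i, ∑ j, (X - vecMulVec x x) i j * (u ⬝ᵥ (L i j *ᵥ u)) := by
    simp only [quadForm_pencil, Matrix.sub_apply, sub_mul, Finset.sum_sub_distrib]
    ring
  have h6 : -∑ i, ∑ j, (X - vecMulVec x x) i j * (u ⬝ᵥ (L i j *ᵥ u))
      ≤ (∑ i, ∑ j, ∑ k, ∑ l, |L i j k l|) * t * (u ⬝ᵥ u) := by
    rw [mul_assoc, Finset.sum_mul, ← Finset.sum_neg_distrib]
    refine Finset.sum_le_sum fun i _ => ?_
    rw [Finset.sum_mul, ← Finset.sum_neg_distrib]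
    refine Finset.sum_le_sum fun j _ => (neg_le_abs _).trans ?_
    rw [abs_mul]
    calc |(X - vecMulVec x x) i j| * |u ⬝ᵥ (L i j *ᵥ u)|
        ≤ t * ((∑ k, ∑ l, |L i j k l|) * (u ⬝ᵥ u)) :=
          mul_le_mul (htb i j) (abs_quadForm_le _ u) (abs_nonneg _) ht
      _ = _ := by ring
  linarith

/-- Scalar form of the feasibility of `x + κtb`: in the expansion `quadForm_pencil_step` with
`s = κt`, the MFCQ margin `-sεN` absorbs both the infeasibility `MtN` of `x` and the quadratic
remainder `s²qN`. -/
lemma scalar_step {M κ t N ε q p₀ p₁ p₂ : ℝ} (hM : 0 ≤ M) (hκ : 0 ≤ κ) (ht : 0 ≤ t) (hN : 0 ≤ N)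
    (hκε : κ * ε = 2 * (M + 1)) (hs1 : κ * t ≤ 1) (hsq : κ * t * q ≤ ε / 2)
    (h0 : p₀ ≤ M * t * N) (h1 : p₁ ≤ -ε * N) (h2 : p₂ ≤ q * N) :
    (1 - κ * t) * p₀ + κ * t * p₁ + (κ * t) ^ 2 * p₂ ≤ 0 := by
  have hs0 : 0 ≤ κ * t := by positivity
  have e1 := mul_le_mul_of_nonneg_left h0 (sub_nonneg.2 hs1)
  have e2 := mul_le_mul_of_nonneg_left h1 hs0
  have e3 := mul_le_mul_of_nonneg_left h2 (sq_nonneg (κ * t))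
  have e4 : (1 - κ * t) * (M * t * N) ≤ M * t * N :=
    mul_le_of_le_one_left (by positivity) (by linarith)
  have e5 : (κ * t) ^ 2 * (q * N) ≤ κ * t * (ε / 2) * N := by
    have := mul_le_mul_of_nonneg_right (mul_le_mul_of_nonneg_left hsq hs0) hN
    linarith
  have e6 : κ * t * (ε / 2) * N = (M + 1) * t * N := by
    linear_combination (t * N / 2) * hκε
  have e7 : κ * t * (-ε * N) = -(2 * ((M + 1) * t * N)) := by
    linear_combination (-t * N) * hκε
  have e8 : 0 ≤ t * N := by positivity
  linarith

set_option maxHeartbeats 800000 in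
/-- If `η` exceeds a threshold, every feasible point `(x, X)` of the relaxation that is at least as
good as `x̌` and has `X ≠ xxᵀ` is strictly worse than some point `(y, yyᵀ)` with `y` feasible for
the original problem. The point is `y = x + κ t b`, where `b` is the MFCQ direction and
`t = tr (X - xxᵀ)` measures the relaxation gap. -/
lemma exact_penalty {n m : ℕ} {F0 : Matrix (Fin m) (Fin m) ℝ}
    {K : Fin n → Matrix (Fin m) (Fin m) ℝ} {L : Fin n → Fin n → Matrix (Fin m) (Fin m) ℝ}
    (hF0 : F0.IsSymm) (hK : ∀ k, (K k).IsSymm)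
    (hL : ∀ i j, (L i j).IsSymm) (hLsy : ∀ i j, L i j = L j i)
    (c : Fin n → ℝ) {xc : Fin n → ℝ} (hmfcq : MFCQ F0 K L xc) :
    ∃ η₀ > (0 : ℝ), ∀ η ≥ η₀, ∀ x X, RelFeasible F0 K L (coneC3 n) x X →
      relObj c xc η x X ≤ c ⬝ᵥ xc → X ≠ vecMulVec x x →
      ∃ y ∈ feasSet F0 K L, relObj c xc η y (vecMulVec y y) < relObj c xc η x X := by
  obtain ⟨b, ε, hε, ρ, hρ, hunif⟩ := hmfcq.uniform
  set G := ∑ i, |c i| with hG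
  set B := ∑ i, |b i| with hB
  have hG0 : 0 ≤ G := Finset.sum_nonneg fun _ _ => abs_nonneg _
  have hB0 : 0 ≤ B := Finset.sum_nonneg fun _ _ => abs_nonneg _
  -- `M * t` bounds the quadratic form of `∑ Hᵢⱼ Lᵢⱼ` when `|Hᵢⱼ| ≤ t`
  set M := ∑ i, ∑ j, ∑ k, ∑ l, |L i j k l| with hM
  have hM0 : 0 ≤ M := by positivity
  set Q := ∑ i, ∑ j, (b i * b j) • L i j with hQ
  set q := ∑ k, ∑ l, |Q k l| with hq
  have hq0 : 0 ≤ q := by positivity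
  set κ := 2 * (M + 1) / ε with hκ
  have hκ0 : 0 < κ := by positivity
  have hκε : κ * ε = 2 * (M + 1) := by
    rw [hκ]
    field_simp
  obtain ⟨η₀, hη₀⟩ := Filter.eventually_atTop.1
    ((Filter.eventually_ge_atTop (1 : ℝ)).and <|
      (Filter.eventually_gt_atTop (G / ρ)).and <|
      (Filter.eventually_ge_atTop (κ * G ^ 2)).and <|
      (Filter.eventually_ge_atTop (κ * G ^ 2 * q / (ε / 2))).and <|
      (Filter.eventually_gt_atTop (κ * (c ⬝ᵥ b) + 2 * κ * (B * G) + κ ^ 2 * G ^ 2 * (b ⬝ᵥ b))))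
  refine ⟨max η₀ 1, by positivity, fun η hη x X hX hle hne => ?_⟩
  obtain ⟨hη1, hηρ, hηκ, hηq, hηc⟩ := hη₀ η ((le_max_left _ _).trans hη)
  have hη0 : 0 < η := by linarith
  rw [div_lt_iff₀ hρ] at hηρ
  rw [div_le_iff₀ (by positivity)] at hηq
  obtain ⟨hXs, hXp, hXC⟩ := hX
  obtain ⟨ht0, htb⟩ := trace_bounds_of_mem_coneC3 hXC
  set H := X - vecMulVec x x with hH
  set t := H.trace with ht
  set d := x - xc with hd
  set r := ‖d‖ with hr
  have hr0 : 0 ≤ r := norm_nonneg d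
  have htpos : 0 < t := by
    refine lt_of_le_of_ne ht0 fun h => hne ?_
    have : H = 0 := by
      ext i j
      have := htb i j
      rw [← h] at this
      simpa using this
    exact sub_eq_zero.1 this
  rw [relObj_eq] at hle
  -- comparison with `x̌` forces `x` to be within `G / η` of `x̌`, and the gap to be at most `G² / η`
  have hcd : -(c ⬝ᵥ d) ≤ G * r := (neg_le_abs _).trans (abs_dotProduct_le c d)
  have hrd : r ^ 2 ≤ d ⬝ᵥ d := norm_sq_le_dotProduct d
  have hloc : η * (r ^ 2 + t) ≤ G * r := by
    linarith [mul_le_mul_of_nonneg_left hrd hη0.le]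
  obtain ⟨hηr, hηt'⟩ := localisation hη1 hG0 hr0 ht0 hloc
  have hrρ : r < ρ := by
    by_contra! h
    linarith [mul_le_mul_of_nonneg_left h hη0.le]
  have hs1 : κ * t ≤ 1 := by
    have : η * (κ * t) ≤ η * 1 := by
      linarith [mul_le_mul_of_nonneg_left hηt' hκ0.le]
    exact le_of_mul_le_mul_left this hη0
  have hsq : κ * t * q ≤ ε / 2 := by
    have h1 : κ * q * (η * t) ≤ κ * q * G ^ 2 := mul_le_mul_of_nonneg_left hηt' (by positivity)
    have : η * (κ * t * q) ≤ η * (ε / 2) := by linarith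
    exact le_of_mul_le_mul_left this hη0
  refine ⟨x + (κ * t) • b, ?_, ?_⟩
  · change NegSemidef' _
    rw [negSemidef_iff (pencil_isSymm hF0 hK hL _ _)]
    intro u
    rw [quadForm_pencil_step F0 K L hLsy]
    have hu := dotProduct_self_nonneg_real u
    have h1 := hunif x hrρ u
    have h2 : u ⬝ᵥ (Q *ᵥ u) ≤ q * (u ⬝ᵥ u) := (le_abs_self _).trans (abs_quadForm_le Q u)
    have h3 : u ⬝ᵥ (pencil F0 K L x (vecMulVec x x) *ᵥ u) ≤ M * t * (u ⬝ᵥ u) :=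
      quadForm_le_of_gap ht0 htb ((negSemidef_iff (pencil_isSymm hF0 hK hL _ _)).1 hXp u)
    exact scalar_step hM0 hκ0.le ht0 hu hκε hs1 hsq h3 h1 h2
  · rw [relObj_eq, relObj_eq]
    have hy : x + (κ * t) • b - xc = d + (κ * t) • b := by
      rw [hd]
      abel
    have hbd : b ⬝ᵥ d ≤ B * r := (le_abs_self _).trans (abs_dotProduct_le b d)
    rw [hy, sub_self, trace_zero]
    change _ < c ⬝ᵥ xc + c ⬝ᵥ d + η * (d ⬝ᵥ d + t)
    simp only [dotProduct_add, add_dotProduct, dotProduct_smul, smul_dotProduct, smul_eq_mul,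
      dotProduct_comm d b]
    have hbb := dotProduct_self_nonneg_real b
    have f1 : κ * (η * (b ⬝ᵥ d)) ≤ κ * (B * G) := by
      refine mul_le_mul_of_nonneg_left ?_ hκ0.le
      linarith [mul_le_mul_of_nonneg_left hbd hη0.le, mul_le_mul_of_nonneg_left hηr hB0]
    have f2 : κ ^ 2 * (b ⬝ᵥ b) * (η * t) ≤ κ ^ 2 * (b ⬝ᵥ b) * G ^ 2 :=
      mul_le_mul_of_nonneg_left hηt' (by positivity)
    have f3 : κ * (c ⬝ᵥ b) + 2 * (κ * (η * (b ⬝ᵥ d))) + κ ^ 2 * (b ⬝ᵥ b) * (η * t) < η := by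
      linarith
    have f4 := mul_lt_mul_of_pos_left f3 htpos
    linarith

/-- The penalized nonconvex problem attains its minimum over the closed set `F`. -/
lemma exists_penalized_min {n m : ℕ} {F0 : Matrix (Fin m) (Fin m) ℝ}
    {K : Fin n → Matrix (Fin m) (Fin m) ℝ} {L : Fin n → Fin n → Matrix (Fin m) (Fin m) ℝ}
    (hF0 : F0.IsSymm) (hK : ∀ k, (K k).IsSymm) (hL : ∀ i j, (L i j).IsSymm)
    (c : Fin n → ℝ) {xc : Fin n → ℝ} (hfeas : xc ∈ feasSet F0 K L) {η : ℝ} (hη : 0 < η) :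
    ∃ xs ∈ feasSet F0 K L, ∀ y ∈ feasSet F0 K L,
      relObj c xc η xs (vecMulVec xs xs) ≤ relObj c xc η y (vecMulVec y y) := by
  set G := ∑ i, |c i| with hG
  have hG0 : 0 ≤ G := Finset.sum_nonneg fun _ _ => abs_nonneg _
  have hcomp : IsCompact (feasSet F0 K L ∩ Metric.closedBall xc (G / η)) :=
    (isCompact_closedBall xc (G / η)).inter_left (isClosed_feasSet hF0 hK hL)
  have hmem : xc ∈ feasSet F0 K L ∩ Metric.closedBall xc (G / η) :=
    ⟨hfeas, Metric.mem_closedBall_self (by positivity)⟩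
  have hcont : Continuous fun x : Fin n → ℝ => relObj c xc η x (vecMulVec x x) := by
    simp only [relObj, trace_vecMulVec]
    fun_prop
  obtain ⟨xs, hxs, hmin⟩ := hcomp.exists_isMinOn ⟨xc, hmem⟩ hcont.continuousOn
  refine ⟨xs, hxs.1, fun y hy => ?_⟩
  by_cases hyb : y ∈ Metric.closedBall xc (G / η)
  · exact hmin ⟨hy, hyb⟩
  · refine (hmin hmem).trans ?_
    rw [Metric.mem_closedBall, not_le, dist_eq_norm, div_lt_iff₀ hη] at hyb
    simp only [relObj_eq, sub_self, dotProduct_zero, trace_zero, add_zero, mul_zero]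
    have h1 : -(c ⬝ᵥ (y - xc)) ≤ G * ‖y - xc‖ := (neg_le_abs _).trans (abs_dotProduct_le c _)
    have h2 := norm_sq_le_dotProduct (y - xc)
    nlinarith [norm_nonneg (y - xc), mul_le_mul_of_nonneg_left h2 hη.le]

lemma negSemidef_midpoint {m : ℕ} {A B : Matrix (Fin m) (Fin m) ℝ} (hA : NegSemidef' A)
    (hB : NegSemidef' B) : NegSemidef' ((1 / 2 : ℝ) • (A + B)) := by
  have h : -((1 / 2 : ℝ) • (A + B)) = (1 / 2 : ℝ) • (-A + -B) := by
    rw [← smul_neg, neg_add]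
  rw [NegSemidef', h]
  exact (PosSemidef.add hA hB).smul (by norm_num : (0 : ℝ) ≤ 1 / 2)

lemma pencil_midpoint {n m : ℕ} (F0 : Matrix (Fin m) (Fin m) ℝ)
    (K : Fin n → Matrix (Fin m) (Fin m) ℝ) (L : Fin n → Fin n → Matrix (Fin m) (Fin m) ℝ)
    (x y : Fin n → ℝ) (X Y : Matrix (Fin n) (Fin n) ℝ) :
    pencil F0 K L ((1 / 2 : ℝ) • (x + y)) ((1 / 2 : ℝ) • (X + Y))
      = (1 / 2 : ℝ) • (pencil F0 K L x X + pencil F0 K L y Y) := by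
  ext k l
  simp only [pencil, Matrix.add_apply, Matrix.smul_apply, Matrix.sum_apply, Pi.add_apply,
    Pi.smul_apply, smul_eq_mul, mul_add, add_mul, Finset.sum_add_distrib, Finset.mul_sum,
    mul_assoc]
  ring

lemma vecMulVec_midpoint {n : ℕ} (x y : Fin n → ℝ) :
    (1 / 2 : ℝ) • (vecMulVec x x + vecMulVec y y)
        - vecMulVec ((1 / 2 : ℝ) • (x + y)) ((1 / 2 : ℝ) • (x + y))
      = vecMulVec ((1 / 2 : ℝ) • (x - y)) ((1 / 2 : ℝ) • (x - y)) := by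
  ext i j
  simp only [Matrix.sub_apply, Matrix.smul_apply, Matrix.add_apply, vecMulVec_apply,
    Pi.smul_apply, Pi.add_apply, Pi.sub_apply, smul_eq_mul]
  ring

lemma relObj_midpoint {n : ℕ} (c xc : Fin n → ℝ) (η : ℝ) (x y : Fin n → ℝ)
    (X Y : Matrix (Fin n) (Fin n) ℝ) :
    relObj c xc η ((1 / 2 : ℝ) • (x + y)) ((1 / 2 : ℝ) • (X + Y))
      = (relObj c xc η x X + relObj c xc η y Y) / 2 := by
  simp only [relObj, dotProduct_smul, dotProduct_add, trace_smul, trace_add, smul_eq_mul]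
  ring

theorem bmi_theorem_one {n m : ℕ} (hn : 0 < n) (hm : 0 < m)
    (F0 : Matrix (Fin m) (Fin m) ℝ)
    (K : Fin n → Matrix (Fin m) (Fin m) ℝ)
    (L : Fin n → Fin n → Matrix (Fin m) (Fin m) ℝ)
    (hF0 : F0.IsSymm) (hK : ∀ k, (K k).IsSymm)
    (hL : ∀ i j, (L i j).IsSymm) (hLsy : ∀ i j, L i j = L j i)
    (c xc : Fin n → ℝ)
    (hne : (feasSet F0 K L).Nonempty)
    (hfeas : xc ∈ feasSet F0 K L)
    (hmfcq : MFCQ F0 K L xc)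
    (C : Set (Matrix (Fin n) (Fin n) ℝ))
    (hC : C = coneC1 n ∨ C = coneC2 n ∨ C = coneC3 n) :
    ∃ η₀ > (0 : ℝ), ∀ η ≥ η₀,
      ∃ (xs : Fin n → ℝ) (Xs : Matrix (Fin n) (Fin n) ℝ),
        IsOptRel F0 K L c xc η C xs Xs ∧
        (∀ y Y, IsOptRel F0 K L c xc η C y Y → y = xs ∧ Y = Xs) ∧
        Xs = vecMulVec xs xs ∧ c ⬝ᵥ xs ≤ c ⬝ᵥ xc := by
  have hsub : C ⊆ coneC3 n := by
    rcases hC with rfl | rfl | rfl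
    exacts [coneC1_subset_coneC3 n, coneC2_subset_coneC3 n, subset_rfl]
  have hrank1 : ∀ v : Fin n → ℝ, vecMulVec v v ∈ C := by
    rcases hC with rfl | rfl | rfl
    exacts [vecMulVec_self_mem_coneC1, vecMulVec_self_mem_coneC2,
      fun v => coneC2_subset_coneC3 n (vecMulVec_self_mem_coneC2 v)]
  have hlift : ∀ y ∈ feasSet F0 K L, RelFeasible F0 K L C y (vecMulVec y y) := fun y hy =>
    ⟨transpose_vecMulVec y y, hy, by simpa using hrank1 0⟩
  obtain ⟨η₀, hη₀, hpen⟩ := exact_penalty hF0 hK hL hLsy c hmfcq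
  refine ⟨η₀, hη₀, fun η hη => ?_⟩
  have hval : relObj c xc η xc (vecMulVec xc xc) = c ⬝ᵥ xc := by simp [relObj_eq]
  -- every optimal solution of the relaxation has zero gap, by the exact penalty lemma
  have hexact : ∀ y Y, IsOptRel F0 K L c xc η C y Y → Y = vecMulVec y y := by
    intro y Y hY
    by_contra hne'
    obtain ⟨z, hz, hlt⟩ := hpen η hη y Y ⟨hY.1.1, hY.1.2.1, hsub hY.1.2.2⟩
      ((hY.2 _ _ (hlift xc hfeas)).trans hval.le) hne'
    exact (hY.2 _ _ (hlift z hz)).not_gt hlt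
  obtain ⟨xs, hxs, hmin⟩ := exists_penalized_min hF0 hK hL c hfeas (hη₀.trans_le hη)
  have hopt : IsOptRel F0 K L c xc η C xs (vecMulVec xs xs) := by
    refine ⟨hlift xs hxs, fun y Y hY => ?_⟩
    by_cases hle : relObj c xc η y Y ≤ c ⬝ᵥ xc
    · by_cases hYy : Y = vecMulVec y y
      · subst hYy
        exact hmin y hY.2.1
      · obtain ⟨z, hz, hlt⟩ := hpen η hη y Y ⟨hY.1, hY.2.1, hsub hY.2.2⟩ hle hYy
        exact (hmin z hz).trans hlt.le
    · exact ((hmin xc hfeas).trans hval.le).trans (not_le.1 hle).le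
  refine ⟨xs, vecMulVec xs xs, hopt, fun y Y hY => ?_, rfl, ?_⟩
  · -- the midpoint of two optimal solutions is optimal, and its gap is `vvᵀ` with `v = (y - xs) / 2`
    have hYy := hexact y Y hY
    subst hYy
    have hmid : IsOptRel F0 K L c xc η C ((1 / 2 : ℝ) • (y + xs))
        ((1 / 2 : ℝ) • (vecMulVec y y + vecMulVec xs xs)) := by
      refine ⟨⟨?_, ?_, ?_⟩, fun z Z hZ => ?_⟩
      · simp [Matrix.IsSymm, transpose_vecMulVec]
      · rw [pencil_midpoint]
        exact negSemidef_midpoint hY.1.2.1 hopt.1.2.1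
      · rw [vecMulVec_midpoint]
        exact hrank1 _
      · rw [relObj_midpoint]
        linarith [hY.2 z Z hZ, hopt.2 z Z hZ]
    have hgap := sub_eq_zero.2 (hexact _ _ hmid)
    rw [vecMulVec_midpoint] at hgap
    have hyx : y = xs := by
      funext i
      have := congrFun (congrFun hgap i) i
      simp only [vecMulVec_apply, Pi.smul_apply, Pi.sub_apply, smul_eq_mul, Matrix.zero_apply,
        mul_self_eq_zero] at this
      linarith
    exact ⟨hyx, by rw [hyx]⟩
  · have h1 := (hmin xc hfeas).trans hval.le
    rw [relObj_eq, dotProduct_sub, sub_self, trace_zero] at h1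
    nlinarith [mul_nonneg (hη₀.trans_le hη).le (dotProduct_self_nonneg_real (xs - xc))]
end
end

section
/- Lemma 2: Suppose x̌ ∈ F is a feasible point of the BMI problem that satisfies the MFCQ condition. Then there exists η₀ > 0 such that for all η ≥ η₀, every optimal solution x* of the penalized problem (P_η) also satisfies the MFCQ condition. -/
/-!
MFCQ is an open condition: for a fixed direction `b` the matrix in its definition is symmetric and
continuous in `x`, and positive definiteness is stable under small symmetric perturbations because
the unit sphere is compact (`eventually_posDef`, `eventually_MFCQ`). On the other hand, comparing
an optimal solution `x` of `(P_η)` with the feasible point `xc` gives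
`η ‖x - xc‖² ≤ -cᵀ(x - xc)`, hence `‖x - xc‖ ≤ ‖c‖ / η` (`sum_sq_le_of_isOptPen`). For large `η`,
every optimal solution therefore lies in the neighbourhood of `xc` on which MFCQ holds.
-/

open Matrix

noncomputable section

/-- Along a continuous family of symmetric matrices, positive definiteness at one parameter value
persists nearby: the quadratic form is jointly continuous and positive on the compact unit sphere,
and homogeneity extends positivity from the sphere to all nonzero vectors. -/
lemma eventually_posDef {X : Type*} [TopologicalSpace X] {m : ℕ}
    {A : X → Matrix (Fin m) (Fin m) ℝ} (hA : Continuous A) (hsymm : ∀ x, (A x).IsSymm)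
    {x₀ : X} (h₀ : (A x₀).PosDef) : ∀ᶠ x in nhds x₀, (A x).PosDef := by
  have key : ∀ᶠ x in nhds x₀, ∀ u ∈ Metric.sphere (0 : Fin m → ℝ) 1,
      0 < u ⬝ᵥ (A x *ᵥ u) := by
    apply (isCompact_sphere (0 : Fin m → ℝ) 1).eventually_forall_of_forall_eventually
    intro u hu
    have hcont : Continuous fun z : X × (Fin m → ℝ) => z.2 ⬝ᵥ (A z.1 *ᵥ z.2) := by
      fun_prop
    have hu0 : u ≠ 0 := by
      rintro rfl
      simp at hu
    have hpos : 0 < u ⬝ᵥ (A x₀ *ᵥ u) := by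
      simpa using h₀.dotProduct_mulVec_pos hu0
    exact hcont.continuousAt.eventually (lt_mem_nhds hpos)
  filter_upwards [key] with x hx
  refine PosDef.of_dotProduct_mulVec_pos ?_ fun u hu => ?_
  · rw [IsHermitian, conjTranspose_eq_transpose_of_trivial]
    exact hsymm x
  · have hnorm : 0 < ‖u‖ := norm_pos_iff.mpr hu
    have h := hx (‖u‖⁻¹ • u) (by simp [norm_smul, hnorm.ne'])
    rw [mulVec_smul, dotProduct_smul, smul_dotProduct, smul_eq_mul, smul_eq_mul] at h
    have hinv : 0 < ‖u‖⁻¹ := inv_pos.mpr hnorm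
    rw [mul_pos_iff_of_pos_left hinv, mul_pos_iff_of_pos_left hinv] at h
    simpa using h

lemma eventually_MFCQ {n m : ℕ} {F0 : Matrix (Fin m) (Fin m) ℝ}
    {K : Fin n → Matrix (Fin m) (Fin m) ℝ}
    {L : Fin n → Fin n → Matrix (Fin m) (Fin m) ℝ}
    (hF0 : F0.IsSymm) (hK : ∀ k, (K k).IsSymm) (hL : ∀ i j, (L i j).IsSymm)
    {xc : Fin n → ℝ} (h : MFCQ F0 K L xc) :
    ∀ᶠ x in nhds xc, MFCQ F0 K L x := by
  obtain ⟨b, hb⟩ := h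
  have hcont : Continuous fun x : Fin n → ℝ =>
      -(pencil F0 K L x (vecMulVec x x) + ∑ k, b k • (K k + deltaMat L k x)) := by
    simp only [pencil, deltaMat, vecMulVec_apply]
    fun_prop
  have hsymm : ∀ x : Fin n → ℝ,
      (-(pencil F0 K L x (vecMulVec x x) + ∑ k, b k • (K k + deltaMat L k x))).IsSymm := by
    intro x
    simp only [pencil, deltaMat, IsSymm, transpose_neg, transpose_add, transpose_sum,
      transpose_smul, hF0.eq, (hK _).eq, (hL _ _).eq]
  filter_upwards [eventually_posDef hcont hsymm hb] with x hx
  exact ⟨b, hx⟩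

lemma vecNorm_sq {k : ℕ} (u : Fin k → ℝ) : vecNorm u ^ 2 = ∑ i, u i ^ 2 :=
  Real.sq_sqrt (Finset.sum_nonneg fun i _ => sq_nonneg (u i))

/-- An optimal solution of `(P_η)` satisfies `η² ‖x - xc‖² ≤ ‖c‖²`. -/
lemma sum_sq_le_of_isOptPen {n m : ℕ} {F0 : Matrix (Fin m) (Fin m) ℝ}
    {K : Fin n → Matrix (Fin m) (Fin m) ℝ}
    {L : Fin n → Fin n → Matrix (Fin m) (Fin m) ℝ} {c xc x : Fin n → ℝ} {η : ℝ} (hη : 0 < η)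
    (hfeas : xc ∈ feasSet F0 K L) (hx : IsOptPen F0 K L c xc η x) :
    η ^ 2 * ∑ i, (x i - xc i) ^ 2 ≤ ∑ i, c i ^ 2 := by
  have h := hx.2 xc hfeas
  simp only [penObj, vecNorm_sq, dotProduct, Pi.sub_apply, sub_self, Pi.zero_apply, ne_eq,
    OfNat.ofNat_ne_zero, not_false_eq_true, zero_pow, Finset.sum_const_zero, mul_zero, add_zero] at h
  -- Sum of the coordinatewise inequalities `0 ≤ (cᵢ + η (xᵢ - xcᵢ))²`.
  have hsq : 0 ≤ ∑ i, (c i + η * (x i - xc i)) ^ 2 :=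
    Finset.sum_nonneg fun i _ => sq_nonneg _
  have hexp : ∑ i, (c i + η * (x i - xc i)) ^ 2 = ∑ i, c i ^ 2
      + 2 * η * (∑ i, c i * x i - ∑ i, c i * xc i) + η ^ 2 * ∑ i, (x i - xc i) ^ 2 := by
    rw [← Finset.sum_sub_distrib, Finset.mul_sum, Finset.mul_sum, ← Finset.sum_add_distrib,
      ← Finset.sum_add_distrib]
    exact Finset.sum_congr rfl fun i _ => by ring
  nlinarith [mul_le_mul_of_nonneg_left h hη.le]

theorem bmi_lemma_two {n m : ℕ} (hn : 0 < n) (hm : 0 < m)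
    (F0 : Matrix (Fin m) (Fin m) ℝ)
    (K : Fin n → Matrix (Fin m) (Fin m) ℝ)
    (L : Fin n → Fin n → Matrix (Fin m) (Fin m) ℝ)
    (hF0 : F0.IsSymm) (hK : ∀ k, (K k).IsSymm)
    (hL : ∀ i j, (L i j).IsSymm) (hLsy : ∀ i j, L i j = L j i)
    (c xc : Fin n → ℝ)
    (hfeas : xc ∈ feasSet F0 K L)
    (hmfcq : MFCQ F0 K L xc) :
    ∃ η₀ > (0 : ℝ), ∀ η ≥ η₀,
      ∀ xs : Fin n → ℝ, IsOptPen F0 K L c xc η xs → MFCQ F0 K L xs := by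
  obtain ⟨ε, hε, hball⟩ := Metric.eventually_nhds_iff.mp (eventually_MFCQ hF0 hK hL hmfcq)
  have hC : 0 ≤ ∑ i, c i ^ 2 := Finset.sum_nonneg fun i _ => sq_nonneg (c i)
  -- Any `η₀` with `‖c‖ < η₀ * ε` works, and `‖c‖² < (‖c‖² + 1)²`.
  refine ⟨(∑ i, c i ^ 2 + 1) / ε, by positivity, fun η hη xs hxs => ?_⟩
  have hη0 : 0 < η := lt_of_lt_of_le (by positivity) hη
  have hηε : ∑ i, c i ^ 2 + 1 ≤ η * ε := (div_le_iff₀ hε).mp hη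
  apply hball
  rw [dist_pi_lt_iff hε]
  intro i
  rw [Real.dist_eq]
  have hbound := sum_sq_le_of_isOptPen hη0 hfeas hxs
  have hi : (xs i - xc i) ^ 2 ≤ ∑ j, (xs j - xc j) ^ 2 :=
    Finset.single_le_sum (f := fun j => (xs j - xc j) ^ 2) (fun j _ => sq_nonneg _)
      (Finset.mem_univ i)
  have hlt : (η * (xs i - xc i)) ^ 2 < (η * ε) ^ 2 := by
    nlinarith [mul_le_mul_of_nonneg_left hi (sq_nonneg η)]
  have habs := abs_lt_of_sq_lt_sq hlt (by positivity)
  rw [abs_mul, abs_of_pos hη0] at habs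
  exact lt_of_mul_lt_mul_left habs hη0.le
end
end

section
/- Lemma 3: Suppose the BMI feasible set F is nonempty and x̌ ∈ ℝⁿ satisfies s(x̌) > 2‖p‖₂ d_F(x̌). Then for every ε > 0 there exists η₀ > 0 such that for all η ≥ η₀, every optimal solution x* of the penalized problem (P_η) satisfies s(x̌) − s(x*) ≤ 2‖p‖₂ d_F(x̌) + ε, and moreover x* satisfies the MFCQ condition. -/
/-!
The function `s` is Lipschitz with constant `2‖p‖₂` (`sFun_sub_le`): for unit `b` and `u`, the
Rayleigh quotients of `-∑ₖ bₖ (Kₖ + δₖ(x))` and `-∑ₖ bₖ (Kₖ + δₖ(y))` at `u` differ by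
`2 bᵀ M(u) (y - x)`, and passing to the infimum over `u` and the supremum over `b` keeps the bound.

Minimizers of `(P_η)` satisfy `‖x* - x̌‖ ≤ ‖a - x̌‖ + ‖c‖ / η` for every feasible `a`
(`vecNorm_sub_le_of_isOptPen`), so for large `η` their distance to `x̌` exceeds `d_F(x̌)` by as
little as desired. Together these give the bound on `s(x̌) - s(x*)`, and with the strict gap
`s(x̌) > 2‖p‖₂ d_F(x̌)` also `s(x*) > 0`. The latter provides `b` making
`∑ₖ bₖ (Kₖ + δₖ(x*))` negative definite, hence MFCQ at the feasible point `x*`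
(`mfcq_of_sFun_pos`).

The quantities `λ_min`, `s` and the norms are infima and suprema of sets indexed by unit spheres;
the boundedness of these sets comes from compactness.
-/

open Matrix

noncomputable section

/-! ### The Euclidean norm and its unit sphere -/

lemma vecNorm_nonneg {k : ℕ} (u : Fin k → ℝ) : 0 ≤ vecNorm u := Real.sqrt_nonneg _

lemma vecNorm_smul {k : ℕ} (t : ℝ) (u : Fin k → ℝ) : vecNorm (t • u) = |t| * vecNorm u := by
  unfold vecNorm
  simp only [Pi.smul_apply, smul_eq_mul, mul_pow, ← Finset.mul_sum]
  rw [Real.sqrt_mul (sq_nonneg t), Real.sqrt_sq_eq_abs]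

lemma vecNorm_sub_comm {k : ℕ} (u v : Fin k → ℝ) : vecNorm (u - v) = vecNorm (v - u) := by
  rw [← neg_sub v u, ← neg_one_smul ℝ (v - u), vecNorm_smul]; simp

lemma vecNorm_eq_zero {k : ℕ} {u : Fin k → ℝ} (h : vecNorm u = 0) : u = 0 := by
  have h2 := vecNorm_sq u
  rw [h, zero_pow two_ne_zero, eq_comm,
    Finset.sum_eq_zero_iff_of_nonneg (fun _ _ => sq_nonneg _)] at h2
  funext i
  simpa using h2 i (Finset.mem_univ i)

lemma continuous_vecNorm {k : ℕ} : Continuous (vecNorm : (Fin k → ℝ) → ℝ) := by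
  unfold vecNorm; fun_prop

lemma dotProduct_le_vecNorm {k : ℕ} (u v : Fin k → ℝ) : u ⬝ᵥ v ≤ vecNorm u * vecNorm v :=
  Real.sum_mul_le_sqrt_mul_sqrt _ _ _

lemma exists_vecNorm_eq_one {k : ℕ} (hk : 0 < k) : ∃ u : Fin k → ℝ, vecNorm u = 1 := by
  refine ⟨Pi.single ⟨0, hk⟩ 1, ?_⟩
  simp [vecNorm, Pi.single_apply]

lemma isCompact_vecNorm_sphere (k : ℕ) : IsCompact {u : Fin k → ℝ | vecNorm u = 1} := by
  refine Metric.isCompact_of_isClosed_isBounded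
    (isClosed_eq continuous_vecNorm continuous_const) ?_
  refine (Metric.isBounded_closedBall (x := (0 : Fin k → ℝ)) (r := 1)).subset fun u hu => ?_
  rw [mem_closedBall_zero_iff, pi_norm_le_iff_of_nonneg zero_le_one]
  intro i
  have h1 : u i ^ 2 ≤ ∑ j, u j ^ 2 :=
    Finset.single_le_sum (f := fun j => u j ^ 2) (fun _ _ => sq_nonneg _) (Finset.mem_univ i)
  rw [← vecNorm_sq, show vecNorm u = 1 from hu] at h1
  rw [Real.norm_eq_abs]
  exact abs_le_one_iff_mul_self_le_one.mpr (by nlinarith)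

lemma bddAbove_of_continuous {k : ℕ} {f : (Fin k → ℝ) → ℝ} (hf : Continuous f) :
    BddAbove {r | ∃ u : Fin k → ℝ, vecNorm u = 1 ∧ r = f u} := by
  obtain ⟨B, hB⟩ := (isCompact_vecNorm_sphere k).bddAbove_image hf.continuousOn
  exact ⟨B, fun r ⟨u, hu, hr⟩ => hr ▸ hB ⟨u, hu, rfl⟩⟩

lemma bddBelow_of_continuous {k : ℕ} {f : (Fin k → ℝ) → ℝ} (hf : Continuous f) :
    BddBelow {r | ∃ u : Fin k → ℝ, vecNorm u = 1 ∧ r = f u} := by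
  obtain ⟨B, hB⟩ := (isCompact_vecNorm_sphere k).bddBelow_image hf.continuousOn
  exact ⟨B, fun r ⟨u, hu, hr⟩ => hr ▸ hB ⟨u, hu, rfl⟩⟩

/-! ### Spectral norm and pencil norm -/

lemma vecNorm_mulVec_le {k : ℕ} (A : Matrix (Fin k) (Fin k) ℝ) (v : Fin k → ℝ) :
    vecNorm (A *ᵥ v) ≤ specNorm A * vecNorm v := by
  rcases (vecNorm_nonneg v).eq_or_lt with h | h
  · rw [vecNorm_eq_zero h.symm]; simp [vecNorm]
  · have hmem : vecNorm (A *ᵥ ((vecNorm v)⁻¹ • v)) ≤ specNorm A := by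
      refine le_csSup (bddAbove_of_continuous (f := fun v => vecNorm (A *ᵥ v)) ?_)
        ⟨(vecNorm v)⁻¹ • v, ?_, rfl⟩
      · exact continuous_vecNorm.comp (by fun_prop)
      · rw [vecNorm_smul, abs_of_pos (inv_pos.2 h), inv_mul_cancel₀ h.ne']
    rw [mulVec_smul, vecNorm_smul, abs_of_pos (inv_pos.2 h), inv_mul_le_iff₀ h] at hmem
    linarith

lemma specNorm_nonneg {k : ℕ} (A : Matrix (Fin k) (Fin k) ℝ) : 0 ≤ specNorm A :=
  Real.sSup_nonneg fun _ ⟨_, _, hr⟩ => hr ▸ vecNorm_nonneg _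

/-- The spectral norm is at most the Frobenius norm, which is visibly continuous in the entries. -/
lemma specNorm_le_frobenius {k : ℕ} (A : Matrix (Fin k) (Fin k) ℝ) :
    specNorm A ≤ Real.sqrt (∑ i, ∑ j, A i j ^ 2) := by
  refine Real.sSup_le ?_ (Real.sqrt_nonneg _)
  rintro _ ⟨v, hv, rfl⟩
  refine Real.sqrt_le_sqrt (Finset.sum_le_sum fun i _ => ?_)
  have h : (A *ᵥ v) i ^ 2 ≤ (∑ j, A i j ^ 2) * ∑ j, v j ^ 2 :=
    Finset.sum_mul_sq_le_sq_mul_sq Finset.univ (A i) v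
  rwa [← vecNorm_sq v, hv, one_pow, mul_one] at h

lemma specNorm_le_pencilNorm {n m : ℕ} (L : Fin n → Fin n → Matrix (Fin m) (Fin m) ℝ)
    {u : Fin m → ℝ} (hu : vecNorm u = 1) :
    specNorm (Matrix.of fun i j => u ⬝ᵥ (L i j *ᵥ u)) ≤ pencilNorm L := by
  refine le_csSup ?_ ⟨u, hu, rfl⟩
  obtain ⟨B, hB⟩ := bddAbove_of_continuous
    (f := fun u : Fin m → ℝ => Real.sqrt (∑ i, ∑ j, (u ⬝ᵥ (L i j *ᵥ u)) ^ 2)) (by fun_prop)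
  refine ⟨B, ?_⟩
  rintro _ ⟨w, hw, rfl⟩
  exact (specNorm_le_frobenius _).trans (hB ⟨w, hw, rfl⟩)

lemma pencilNorm_nonneg {n m : ℕ} (L : Fin n → Fin n → Matrix (Fin m) (Fin m) ℝ) :
    0 ≤ pencilNorm L :=
  Real.sSup_nonneg fun _ ⟨_, _, hr⟩ => hr ▸ specNorm_nonneg _

/-! ### Lipschitz continuity of `s` -/

lemma lambdaMin_le {k : ℕ} (A : Matrix (Fin k) (Fin k) ℝ) {u : Fin k → ℝ}
    (hu : vecNorm u = 1) : lambdaMin A ≤ u ⬝ᵥ (A *ᵥ u) :=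
  csInf_le (bddBelow_of_continuous (f := fun u => u ⬝ᵥ (A *ᵥ u)) (by fun_prop)) ⟨u, hu, rfl⟩

/-- The directional derivative of `x ↦ p(x, xxᵀ)` along `b` is affine in `x`; its Rayleigh
quotient at `u` varies with `x` through the bilinear form of `M(u)`. -/
lemma rayleigh_sub {n m : ℕ} (K : Fin n → Matrix (Fin m) (Fin m) ℝ)
    (L : Fin n → Fin n → Matrix (Fin m) (Fin m) ℝ) (x y b : Fin n → ℝ) (u : Fin m → ℝ) :
    u ⬝ᵥ ((-(∑ k, b k • (K k + deltaMat L k x))) *ᵥ u)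
      - u ⬝ᵥ ((-(∑ k, b k • (K k + deltaMat L k y))) *ᵥ u)
      = 2 * (b ⬝ᵥ ((Matrix.of fun i j => u ⬝ᵥ (L i j *ᵥ u)) *ᵥ (y - x))) := by
  have key : ∀ z : Fin n → ℝ, u ⬝ᵥ ((-(∑ k, b k • (K k + deltaMat L k z))) *ᵥ u)
      = -(∑ k, b k * (u ⬝ᵥ (K k *ᵥ u)))
        - 2 * (b ⬝ᵥ ((Matrix.of fun i j => u ⬝ᵥ (L i j *ᵥ u)) *ᵥ z)) := by
    intro z
    have h1 : ∀ k, u ⬝ᵥ (deltaMat L k z *ᵥ u)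
        = 2 * ((Matrix.of fun i j => u ⬝ᵥ (L i j *ᵥ u)) *ᵥ z) k := by
      intro k
      simp only [deltaMat, smul_mulVec, sum_mulVec, dotProduct_smul, dotProduct_sum, smul_eq_mul]
      congr 1
      simp only [mulVec, dotProduct, Matrix.of_apply]
      exact Finset.sum_congr rfl fun i _ => mul_comm _ _
    simp only [neg_mulVec, sum_mulVec, smul_mulVec, add_mulVec, dotProduct_neg, dotProduct_sum,
      dotProduct_smul, dotProduct_add, smul_eq_mul, h1, mul_add, Finset.sum_add_distrib]
    rw [dotProduct, Finset.mul_sum, neg_add, sub_eq_add_neg]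
    congr 2
    exact Finset.sum_congr rfl fun i _ => by ring
  rw [key, key, mulVec_sub, dotProduct_sub]; ring

/-- `s` is Lipschitz with constant `2‖p‖₂`. -/
lemma sFun_sub_le {n m : ℕ} (hn : 0 < n) (hm : 0 < m) (K : Fin n → Matrix (Fin m) (Fin m) ℝ)
    (L : Fin n → Fin n → Matrix (Fin m) (Fin m) ℝ) (x y : Fin n → ℝ) :
    sFun K L x - sFun K L y ≤ 2 * pencilNorm L * vecNorm (y - x) := by
  obtain ⟨b₀, hb₀⟩ := exists_vecNorm_eq_one hn
  obtain ⟨u₀, hu₀⟩ := exists_vecNorm_eq_one hm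
  have hbdd : BddAbove {r | ∃ b : Fin n → ℝ, vecNorm b = 1 ∧
      r = lambdaMin (-(∑ k, b k • (K k + deltaMat L k y)))} := by
    obtain ⟨B, hB⟩ := bddAbove_of_continuous
      (f := fun b : Fin n → ℝ => u₀ ⬝ᵥ ((-(∑ k, b k • (K k + deltaMat L k y))) *ᵥ u₀))
      (by fun_prop)
    refine ⟨B, ?_⟩
    rintro _ ⟨b, hb, rfl⟩
    exact (lambdaMin_le _ hu₀).trans (hB ⟨b, hb, rfl⟩)
  rw [sub_le_iff_le_add']
  refine csSup_le ⟨_, b₀, hb₀, rfl⟩ ?_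
  rintro _ ⟨b, hb, rfl⟩
  have hs : lambdaMin (-(∑ k, b k • (K k + deltaMat L k y))) ≤ sFun K L y :=
    le_csSup hbdd ⟨b, hb, rfl⟩
  suffices h : lambdaMin (-(∑ k, b k • (K k + deltaMat L k x)))
      - 2 * pencilNorm L * vecNorm (y - x)
      ≤ lambdaMin (-(∑ k, b k • (K k + deltaMat L k y))) by linarith
  refine le_csInf ⟨_, u₀, hu₀, rfl⟩ ?_
  rintro _ ⟨u, hu, rfl⟩
  have h1 := lambdaMin_le (-(∑ k, b k • (K k + deltaMat L k x))) hu
  have h2 := rayleigh_sub K L x y b u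
  have h3 := dotProduct_le_vecNorm b ((Matrix.of fun i j => u ⬝ᵥ (L i j *ᵥ u)) *ᵥ (y - x))
  have h4 := vecNorm_mulVec_le (Matrix.of fun i j => u ⬝ᵥ (L i j *ᵥ u)) (y - x)
  have h5 := mul_le_mul_of_nonneg_right (specNorm_le_pencilNorm L hu) (vecNorm_nonneg (y - x))
  rw [hb, one_mul] at h3
  linarith

/-! ### Positivity of `s` implies MFCQ -/

lemma posDef_of_lambdaMin_pos {k : ℕ} {A : Matrix (Fin k) (Fin k) ℝ} (hA : A.IsSymm)
    (h : 0 < lambdaMin A) : A.PosDef := by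
  refine Matrix.PosDef.of_dotProduct_mulVec_pos
    (by rw [Matrix.IsHermitian, conjTranspose_eq_transpose_of_trivial]; exact hA) ?_
  intro u hu
  have hpos : 0 < vecNorm u :=
    (vecNorm_nonneg u).lt_of_ne fun h0 => hu (vecNorm_eq_zero h0.symm)
  have h1 : lambdaMin A ≤ _ := lambdaMin_le A (u := (vecNorm u)⁻¹ • u)
    (by rw [vecNorm_smul, abs_of_pos (inv_pos.2 hpos), inv_mul_cancel₀ hpos.ne'])
  have h2 := h.trans_le h1
  rw [mulVec_smul, dotProduct_smul, smul_dotProduct, smul_eq_mul, smul_eq_mul] at h2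
  have h3 := inv_pos.2 hpos
  rw [star_trivial]
  exact (mul_pos_iff_of_pos_left h3).1 ((mul_pos_iff_of_pos_left h3).1 h2)

lemma mfcq_of_sFun_pos {n m : ℕ} (F0 : Matrix (Fin m) (Fin m) ℝ)
    (K : Fin n → Matrix (Fin m) (Fin m) ℝ)
    (L : Fin n → Fin n → Matrix (Fin m) (Fin m) ℝ)
    (hK : ∀ k, (K k).IsSymm) (hL : ∀ i j, (L i j).IsSymm) {x : Fin n → ℝ}
    (hx : x ∈ feasSet F0 K L) (hs : 0 < sFun K L x) : MFCQ F0 K L x := by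
  obtain ⟨b, hb⟩ : ∃ b : Fin n → ℝ,
      0 < lambdaMin (-(∑ k, b k • (K k + deltaMat L k x))) := by
    by_contra! hcon
    refine hs.not_ge (Real.sSup_nonpos ?_)
    rintro _ ⟨b, -, rfl⟩
    exact hcon b
  refine ⟨b, ?_⟩
  have hsymm : (-(∑ k, b k • (K k + deltaMat L k x))).IsSymm := by
    simp only [Matrix.IsSymm, deltaMat, transpose_neg, transpose_sum, transpose_smul,
      transpose_add, (hK _).eq, (hL _ _).eq]
  have := (posDef_of_lambdaMin_pos hsymm hb).posSemidef_add hx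
  rwa [← neg_add] at this

/-! ### Minimizers of the penalized problem -/

/-- For large `η`, a minimizer of `(P_η)` is almost as close to `x̌` as any fixed feasible `a`:
comparing objectives gives `η (t² - r²) ≤ ‖c‖ (t + r)` for the two distances `t`, `r`, and
`t + r` cancels. -/
lemma vecNorm_sub_le_of_isOptPen {n m : ℕ} {F0 : Matrix (Fin m) (Fin m) ℝ}
    {K : Fin n → Matrix (Fin m) (Fin m) ℝ}
    {L : Fin n → Fin n → Matrix (Fin m) (Fin m) ℝ} {c xc xs a : Fin n → ℝ} {η τ : ℝ}
    (hτ : 0 < τ) (hη : vecNorm c / τ < η) (hopt : IsOptPen F0 K L c xc η xs)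
    (ha : a ∈ feasSet F0 K L) : vecNorm (xs - xc) ≤ vecNorm (a - xc) + τ := by
  by_contra! hlt
  have hobj := hopt.2 a ha
  unfold penObj at hobj
  have h1 := dotProduct_le_vecNorm c (a - xc)
  have h2 := dotProduct_le_vecNorm c (xc - xs)
  rw [vecNorm_sub_comm xc xs] at h2
  rw [dotProduct_sub] at h1 h2
  rw [div_lt_iff₀ hτ] at hη
  have hr := vecNorm_nonneg (a - xc)
  have hC := vecNorm_nonneg c
  generalize vecNorm (xs - xc) = t at *
  generalize vecNorm (a - xc) = r at *
  have hη0 : 0 < η := pos_of_mul_pos_left (hC.trans_lt hη) hτ.le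
  have h3 : vecNorm c < η * (t - r) := hη.trans (by gcongr; linarith)
  have h4 := mul_lt_mul_of_pos_right h3 (show 0 < t + r by linarith)
  linarith

theorem bmi_lemma_three {n m : ℕ} (hn : 0 < n) (hm : 0 < m)
    (F0 : Matrix (Fin m) (Fin m) ℝ)
    (K : Fin n → Matrix (Fin m) (Fin m) ℝ)
    (L : Fin n → Fin n → Matrix (Fin m) (Fin m) ℝ)
    (hF0 : F0.IsSymm) (hK : ∀ k, (K k).IsSymm)
    (hL : ∀ i j, (L i j).IsSymm) (hLsy : ∀ i j, L i j = L j i)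
    (c xc : Fin n → ℝ)
    (hne : (feasSet F0 K L).Nonempty)
    (hgap : 2 * pencilNorm L * distF F0 K L xc < sFun K L xc) :
    ∀ ε > (0 : ℝ), ∃ η₀ > (0 : ℝ), ∀ η ≥ η₀,
      ∀ xs : Fin n → ℝ, IsOptPen F0 K L c xc η xs →
        sFun K L xc - sFun K L xs ≤ 2 * pencilNorm L * distF F0 K L xc + ε ∧
        MFCQ F0 K L xs := by
  intro ε hε
  have hP := pencilNorm_nonneg L
  set P := pencilNorm L
  set d := distF F0 K L xc with hd
  set g := sFun K L xc - 2 * P * d with hg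
  have hg0 : 0 < g := sub_pos.2 hgap
  -- The total slack `2τ` in the distance costs `4Pτ` in `s`, to be kept below `ε` and `g`.
  obtain ⟨τ, hτ, hτε, hτg⟩ : ∃ τ > 0, 4 * P * τ ≤ ε ∧ 4 * P * τ < g := by
    have hden : 0 < 4 * P + 1 := by linarith
    have hmin : 0 < min ε g := lt_min hε hg0
    have hτ : 0 < min ε g / (4 * P + 1) := div_pos hmin hden
    have heq : (4 * P + 1) * (min ε g / (4 * P + 1)) = min ε g := mul_div_cancel₀ _ hden.ne'
    have hlt : 4 * P * (min ε g / (4 * P + 1)) < min ε g := by linarith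
    exact ⟨_, hτ, (hlt.trans_le (min_le_left _ _)).le, hlt.trans_le (min_le_right _ _)⟩
  obtain ⟨a, ha, had⟩ : ∃ a ∈ feasSet F0 K L, vecNorm (xc - a) < d + τ := by
    obtain ⟨a₀, ha₀⟩ := hne
    obtain ⟨_, ⟨a, ha, rfl⟩, hlt⟩ := exists_lt_of_csInf_lt
      (s := {r | ∃ a ∈ feasSet F0 K L, r = vecNorm (xc - a)}) ⟨_, a₀, ha₀, rfl⟩
      (show _ < d + τ from lt_add_of_pos_right d hτ)
    exact ⟨a, ha, hlt⟩
  have hC := vecNorm_nonneg c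
  refine ⟨vecNorm c / τ + 1, by positivity, fun η hη xs hopt => ?_⟩
  have hdist := vecNorm_sub_le_of_isOptPen hτ (by linarith) hopt ha
  rw [vecNorm_sub_comm a xc] at hdist
  have hlip : sFun K L xc - sFun K L xs ≤ 2 * P * (d + 2 * τ) :=
    (sFun_sub_le hn hm K L xc xs).trans
      (mul_le_mul_of_nonneg_left (by linarith) (by positivity))
  exact ⟨by linarith, mfcq_of_sFun_pos F0 K L hK hL hopt.1 (by linarith)⟩
end
end
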